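/- Let α ∈ (0,1) and λ > 0, and define u : ℝ → ℝ → ℝ by u(t, x) = √(α/(4·π·λ·t^α)) · exp(−(α/(4·λ·t^α))·x²) for t > 0. Then for every t > 0 and every x ∈ ℝ, u satisfies the conformable time-fractional diffusion equation in the form t^{1−α} · ∂u/∂t (t, x) = λ · ∂²u/∂x² (t, x), where ∂u/∂t (t, x) = deriv (fun s => u s x) t and ∂²u/∂x² (t, x) = deriv (deriv (fun y => u t y)) x. -/

import Mathlib

open Real Filter Topology

/-!
The conformable derivative of order `α` is the ordinary derivative with respect to the clock
`t ^ α / α`. Run in that clock, the conformable diffusion equation becomes the classical heat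
equation `∂K/∂τ = ∂²K/∂x²` in the time `τ = λ t ^ α / α`, and `u` is the Gaussian heat kernel
at that time.
-/

/-- The heat kernel on the line, the fundamental solution of `∂K/∂τ = ∂²K/∂x²`. It is meaningful
for `τ > 0`; for `τ ≤ 0` it takes the value `0`, as the square root does. -/
noncomputable def heatKernel (τ x : ℝ) : ℝ :=
  (√(4 * π * τ))⁻¹ * exp (-x ^ 2 / (4 * τ))

/-- The conformable derivative of order `α`, encoded by its value `t ^ (1 - α) • f' t` for
differentiable `f` and `t > 0` instead of by its defining limit. -/
noncomputable def conformableDeriv {E : Type*} [NormedAddCommGroup E] [NormedSpace ℝ E]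
    (α : ℝ) (f : ℝ → E) (t : ℝ) : E :=
  t ^ (1 - α) • deriv f t

/-- The clock of the conformable derivative: the function with conformable derivative `1` which,
for `α > 0`, vanishes at time `0`. -/
noncomputable def conformableTime (α t : ℝ) : ℝ :=
  t ^ α / α

theorem hasDerivAt_heatKernel_space (τ x : ℝ) :
    HasDerivAt (heatKernel τ) (-x / (2 * τ) * heatKernel τ x) x := by
  have hexponent : HasDerivAt (fun y : ℝ => -y ^ 2 / (4 * τ)) (-x / (2 * τ)) x :=
    ((hasDerivAt_pow 2 x).neg.div_const (4 * τ)).congr_deriv (by push_cast; ring)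
  exact (hexponent.exp.const_mul (√(4 * π * τ))⁻¹).congr_deriv (by rw [heatKernel]; ring)

theorem deriv_deriv_heatKernel_space (τ x : ℝ) :
    deriv (deriv (heatKernel τ)) x =
      (x ^ 2 / (4 * τ ^ 2) - 1 / (2 * τ)) * heatKernel τ x := by
  have hfirst : deriv (heatKernel τ) = fun y => -y / (2 * τ) * heatKernel τ y :=
    funext fun y => (hasDerivAt_heatKernel_space τ y).deriv
  have hslope : HasDerivAt (fun y : ℝ => -y / (2 * τ)) (-1 / (2 * τ)) x :=
    (hasDerivAt_neg x).div_const (2 * τ)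
  rw [hfirst]
  refine (hslope.mul (hasDerivAt_heatKernel_space τ x)).deriv.trans ?_
  ring

theorem hasDerivAt_heatKernel_time {τ : ℝ} (hτ : 0 < τ) (x : ℝ) :
    HasDerivAt (fun s => heatKernel s x)
      ((x ^ 2 / (4 * τ ^ 2) - 1 / (2 * τ)) * heatKernel τ x) τ := by
  have hsqrt_sq : √(4 * π * τ) ^ 2 = 4 * π * τ := sq_sqrt (by positivity)
  have hsqrt_pos : 0 < √(4 * π * τ) := by positivity
  have hamplitude : HasDerivAt (fun s => (√(4 * π * s))⁻¹)
      (-1 / (2 * τ) * (√(4 * π * τ))⁻¹) τ := by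
    refine ((((hasDerivAt_id τ).const_mul (4 * π)).sqrt (by positivity)).inv
      hsqrt_pos.ne').congr_deriv ?_
    simp only [id_eq, hsqrt_sq]
    field_simp
  have hexponent : HasDerivAt (fun s => -x ^ 2 / (4 * s)) (x ^ 2 / (4 * τ ^ 2)) τ := by
    refine ((hasDerivAt_const τ (-x ^ 2)).div ((hasDerivAt_id τ).const_mul 4)
      (by positivity)).congr_deriv ?_
    simp only [id_eq]
    field_simp
    ring
  exact (hamplitude.mul hexponent.exp).congr_deriv (by rw [heatKernel]; ring)

theorem hasDerivAt_heatKernel_time_deriv_deriv_space {τ : ℝ} (hτ : 0 < τ) (x : ℝ) :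
    HasDerivAt (fun s => heatKernel s x) (deriv (deriv (heatKernel τ)) x) τ :=
  deriv_deriv_heatKernel_space τ x ▸ hasDerivAt_heatKernel_time hτ x

section

variable {α t : ℝ}

theorem hasDerivAt_conformableTime (hα : α ≠ 0) (ht : t ≠ 0) :
    HasDerivAt (conformableTime α) (t ^ (α - 1)) t :=
  ((hasDerivAt_rpow_const (Or.inl ht)).div_const α).congr_deriv (mul_div_cancel_left₀ _ hα)

variable {E : Type*} [NormedAddCommGroup E] [NormedSpace ℝ E]

theorem conformableDeriv_comp_conformableTime (hα : α ≠ 0) (ht : 0 < t) {f : ℝ → E} {f' : E}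
    (hf : HasDerivAt f f' (conformableTime α t)) :
    conformableDeriv α (fun s => f (conformableTime α s)) t = f' := by
  have hcomp : deriv (fun s => f (conformableTime α s)) t = t ^ (α - 1) • f' :=
    (hf.scomp t (hasDerivAt_conformableTime hα ht.ne')).deriv
  have hcancel : t ^ (1 - α) * t ^ (α - 1) = 1 := by
    rw [← rpow_add ht, sub_add_sub_cancel, sub_self, rpow_zero]
  rw [conformableDeriv, hcomp, smul_smul, hcancel, one_smul]

theorem conformableDeriv_congr {f g : ℝ → E} (h : f =ᶠ[𝓝 t] g) :
    conformableDeriv α f t = conformableDeriv α g t := by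
  rw [conformableDeriv, conformableDeriv, h.deriv_eq]

end

theorem conformableDeriv_heatKernel {α lam t : ℝ} (hlam : 0 < lam / α) (ht : 0 < t) (x : ℝ) :
    conformableDeriv α (fun s => heatKernel (lam * conformableTime α s) x) t =
      lam * deriv (deriv (heatKernel (lam * conformableTime α t))) x := by
  have hα : α ≠ 0 := (div_ne_zero_iff.mp hlam.ne').2
  have hτ : 0 < lam * conformableTime α t := by
    rw [conformableTime, mul_div_left_comm]
    positivity
  have hheat : HasDerivAt (fun r => heatKernel (lam * r) x)
      (lam * deriv (deriv (heatKernel (lam * conformableTime α t))) x) (conformableTime α t) :=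
    (hasDerivAt_heatKernel_time_deriv_deriv_space hτ x).scomp _ (hasDerivAt_const_mul lam)
  exact conformableDeriv_comp_conformableTime hα ht hheat

theorem heatKernel_mul_conformableTime (α lam t x : ℝ) :
    heatKernel (lam * conformableTime α t) x =
      √(α / (4 * π * lam * t ^ α)) * exp (-(α / (4 * lam * t ^ α)) * x ^ 2) := by
  have hamplitude : (4 * π * (lam * (t ^ α / α)))⁻¹ = α / (4 * π * lam * t ^ α) := by
    field_simp
  have hexponent : -x ^ 2 / (4 * (lam * (t ^ α / α))) = -(α / (4 * lam * t ^ α)) * x ^ 2 := by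
    field_simp
  rw [heatKernel, conformableTime, ← sqrt_inv, hamplitude, hexponent]

theorem conformable_diffusion_analytic_solution_general
    (α lam : ℝ) (hlam : 0 < lam / α)
    (u : ℝ → ℝ → ℝ)
    (hu : ∀ t x : ℝ, 0 < t →
      u t x = Real.sqrt (α / (4 * π * lam * t ^ α)) *
        Real.exp (-(α / (4 * lam * t ^ α)) * x ^ 2)) :
    ∀ t x : ℝ, 0 < t →
      t ^ (1 - α) * deriv (fun s => u s x) t
        = lam * deriv (deriv (fun y => u t y)) x := by
  intro t x ht
  have hkernel : ∀ s y, 0 < s → u s y = heatKernel (lam * conformableTime α s) y :=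
    fun s y hs => (hu s y hs).trans (heatKernel_mul_conformableTime α lam s y).symm
  have htime : (fun s => u s x) =ᶠ[𝓝 t] fun s => heatKernel (lam * conformableTime α s) x :=
    (eventually_gt_nhds ht).mono fun s hs => hkernel s x hs
  have hspace : (fun y => u t y) = heatKernel (lam * conformableTime α t) :=
    funext fun y => hkernel t y ht
  calc
    t ^ (1 - α) * deriv (fun s => u s x) t = conformableDeriv α (fun s => u s x) t := rfl
    _ = conformableDeriv α (fun s => heatKernel (lam * conformableTime α s) x) t :=
      conformableDeriv_congr htime
    _ = lam * deriv (deriv (heatKernel (lam * conformableTime α t))) x :=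
      conformableDeriv_heatKernel hlam ht x
    _ = lam * deriv (deriv (fun y => u t y)) x := by rw [hspace]

/-- The function `u (t, x) = √(α/(4πλt^α)) * exp (-(α/(4λt^α)) * x²)` satisfies
the conformable time-fractional diffusion equation in the form
`t ^ (1 - α) * ∂u/∂t = λ * ∂²u/∂x²` for all `t > 0` and `x ∈ ℝ`. -/
theorem conformable_diffusion_analytic_solution
    (α lam : ℝ) (hα : α ∈ Set.Ioo (0 : ℝ) 1) (hlam : 0 < lam)
    (u : ℝ → ℝ → ℝ)
    (hu : ∀ t x : ℝ, 0 < t →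
      u t x = Real.sqrt (α / (4 * π * lam * t ^ α)) *
        Real.exp (-(α / (4 * lam * t ^ α)) * x ^ 2)) :
    ∀ t x : ℝ, 0 < t →
      t ^ (1 - α) * deriv (fun s => u s x) t
        = lam * deriv (deriv (fun y => u t y)) x :=
  conformable_diffusion_analytic_solution_general α lam (div_pos hlam hα.1) u hu
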